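/- arXiv:2203.06645 — 2 statements merged into one kernel-verified Lean document; each statement's English description precedes it below -/
import Mathlib

section
/- The subspace S = ker α̃ has dimension 5, the restriction of B to S is nondegenerate, the B-orthogonal complement S^⊥ of S in ⋀²W is 1-dimensional, and ⋀²W is the internal direct sum of S and S^⊥. -/
/-!
The `B`-orthogonal complement of `ker α̃` is spanned by the vector `ω` with `B ω = α̃`, so all
comes down to `α̃ ω = B ω ω ≠ 0`, that is, to `ω ∧ ω ≠ 0`. Contraction `d ⌋ ·` is an antiderivation,
so if `ω ∧ ω = 0` then `2 (ω ∧ (d ⌋ ω)) = 0` for every `d`, whence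
`α (d ⌋ ω, w) = θ (ω ∧ (d ⌋ ω) ∧ w) = 0` for all `w`. As `α` is nondegenerate, all contractions of
`ω` vanish, and Euler's identity `∑ i, bᵢ ∧ (bᵢ* ⌋ ω) = 2 ω` gives `ω = 0`, which is absurd. The
nondegeneracy of the wedge pairing, which provides `ω`, follows by contraction in the same way.
-/

section Contraction

open CliffordAlgebra

theorem contractLeft_mul {R M : Type*} [CommRing R] [AddCommGroup M] [Module R M]
    {Q : QuadraticForm R M} (d : Module.Dual R M) (x y : CliffordAlgebra Q) :
    contractLeft d (x * y) = contractLeft d x * y + involute x * contractLeft d y := by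
  induction x using left_induction with
  | algebraMap r => simp [contractLeft_algebraMap_mul]
  | add x₁ x₂ ih₁ ih₂ => simp only [add_mul, map_add, ih₁, ih₂]; abel
  | ι_mul x m ih =>
    simp only [mul_assoc, contractLeft_ι_mul, ih, map_mul, involute_ι, sub_mul, mul_add,
      smul_mul_assoc, neg_mul]
    abel

variable {R M : Type*} [CommRing R] [AddCommGroup M] [Module R M]

theorem exteriorPower_le_evenOdd (k : ℕ) :
    ⋀[R]^k M ≤ evenOdd (0 : QuadraticForm R M) (k : ZMod 2) :=
  le_iSup (fun j : {n : ℕ // (n : ZMod 2) = k} ↦ ⋀[R]^(j : ℕ) M) ⟨k, rfl⟩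

theorem involute_eq_or_eq_neg_of_mem_exteriorPower {k : ℕ} {x : ExteriorAlgebra R M}
    (hx : x ∈ ⋀[R]^k M) : involute x = x ∨ involute x = -x := by
  have hx' := exteriorPower_le_evenOdd k hx
  rcases k.even_or_odd with hk | hk
  · exact .inl (involute_eq_of_mem_even (by rwa [hk.natCast_zmod_two] at hx'))
  · exact .inr (involute_eq_of_mem_odd (by rwa [hk.natCast_zmod_two] at hx'))

theorem commute_of_mem_even {x : ExteriorAlgebra R M}
    (hx : x ∈ evenOdd (0 : QuadraticForm R M) 0) (y : ExteriorAlgebra R M) : Commute x y := by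
  induction y using left_induction with
  | algebraMap r => exact (Algebra.commutes r x).symm
  | add y₁ y₂ ih₁ ih₂ => exact ih₁.add_right ih₂
  | ι_mul y m ih =>
    have hm : Commute x (ExteriorAlgebra.ι R m) := by
      simpa using commute_map_mul_map_of_isOrtho_of_mem_evenOdd_zero_left
        (.id 0) (.id 0) (fun _ _ ↦ by simp [QuadraticMap.IsOrtho]) _ _ hx (ι_mem_evenOdd_one _ m)
    exact hm.mul_right ih

theorem contractLeft_mul_self_of_mem_even (d : Module.Dual R M) {x : ExteriorAlgebra R M}
    (hx : x ∈ evenOdd (0 : QuadraticForm R M) 0) :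
    contractLeft d (x * x) = (2 : R) • (x * contractLeft d x) := by
  rw [contractLeft_mul, involute_eq_of_mem_even hx, ← (commute_of_mem_even hx _).eq, two_smul]

theorem ι_mul_mem_exteriorPower_succ (v : M) {k : ℕ} {x : ExteriorAlgebra R M}
    (hx : x ∈ ⋀[R]^k M) : ExteriorAlgebra.ι R v * x ∈ ⋀[R]^(k + 1) M := by
  rw [ExteriorAlgebra.exteriorPower, pow_succ']
  exact Submodule.mul_mem_mul ⟨v, rfl⟩ hx

@[elab_as_elim]
theorem exteriorPower_succ_induction {k : ℕ} {motive : ExteriorAlgebra R M → Prop}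
    (ι_mul : ∀ v, ∀ x ∈ ⋀[R]^k M, motive (ExteriorAlgebra.ι R v * x))
    (add : ∀ x y, motive x → motive y → motive (x + y))
    {x : ExteriorAlgebra R M} (hx : x ∈ ⋀[R]^(k + 1) M) : motive x := by
  rw [ExteriorAlgebra.exteriorPower, pow_succ'] at hx
  refine Submodule.mul_induction_on hx ?_ add
  rintro _ ⟨v, rfl⟩ y hy
  exact ι_mul v y hy

theorem contractLeft_mem_exteriorPower (d : Module.Dual R M) {k : ℕ} {x : ExteriorAlgebra R M}
    (hx : x ∈ ⋀[R]^(k + 1) M) : contractLeft d x ∈ ⋀[R]^k M := by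
  induction k generalizing x with
  | zero =>
    obtain ⟨v, rfl⟩ : x ∈ LinearMap.range (ExteriorAlgebra.ι R) := by simpa using hx
    simp [Submodule.mem_one]
  | succ k ih =>
    refine exteriorPower_succ_induction (fun v y hy ↦ ?_) (fun y z hy hz ↦ ?_) hx
    · rw [contractLeft_ι_mul]
      exact sub_mem (Submodule.smul_mem _ _ hy) (ι_mul_mem_exteriorPower_succ v (ih hy))
    · rw [map_add]
      exact add_mem hy hz

/-- Euler's identity: `∑ i, bᵢ ∧ (bᵢ* ⌋ ·)` is the degree operator. -/
theorem sum_ι_mul_contractLeft {I : Type*} [Fintype I] (b : Module.Basis I R M) {k : ℕ}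
    {x : ExteriorAlgebra R M} (hx : x ∈ ⋀[R]^k M) :
    ∑ i, ExteriorAlgebra.ι R (b i) * contractLeft (b.coord i) x = k • x := by
  induction k generalizing x with
  | zero =>
    obtain ⟨r, rfl⟩ : ∃ r, algebraMap R (ExteriorAlgebra R M) r = x := by
      simpa [Submodule.mem_one] using hx
    simp
  | succ k ih =>
    refine exteriorPower_succ_induction (fun v y hy ↦ ?_) (fun y z hy hz ↦ ?_) hx
    · have hv : ∑ i, b.coord i v • ExteriorAlgebra.ι R (b i) = ExteriorAlgebra.ι R v := by
        simp only [← map_smul, ← map_sum, Module.Basis.coord_apply, b.sum_repr]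
      have hterm (i : I) : ExteriorAlgebra.ι R (b i) *
          contractLeft (b.coord i) (ExteriorAlgebra.ι R v * y) =
          (b.coord i v • ExteriorAlgebra.ι R (b i)) * y + ExteriorAlgebra.ι R v *
            (ExteriorAlgebra.ι R (b i) * contractLeft (b.coord i) y) := by
        rw [contractLeft_ι_mul, mul_sub, ← mul_assoc, ← mul_assoc,
          eq_neg_of_add_eq_zero_left (ExteriorAlgebra.ι_add_mul_swap (b i) v), neg_mul,
          sub_neg_eq_add, mul_smul_comm, smul_mul_assoc]
      simp only [hterm, Finset.sum_add_distrib, ← Finset.sum_mul, ← Finset.mul_sum, hv, ih hy]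
      rw [mul_smul_comm, succ_nsmul']
    · simp only [map_add, mul_add, Finset.sum_add_distrib, hy, hz, smul_add]

end Contraction

section Field

open CliffordAlgebra

variable {K W : Type*} [Field K] [AddCommGroup W] [Module K W] [FiniteDimensional K W]

theorem eq_zero_of_forall_contractLeft_eq_zero {k : ℕ} (hk : (k : K) ≠ 0)
    {x : ExteriorAlgebra K W} (hx : x ∈ ⋀[K]^k W)
    (h : ∀ d : Module.Dual K W, contractLeft d x = 0) : x = 0 := by
  have hkx := sum_ι_mul_contractLeft (Module.finBasis K W) hx
  simp only [h, mul_zero, Finset.sum_const_zero, ← Nat.cast_smul_eq_nsmul K] at hkx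
  exact (smul_eq_zero.1 hkx.symm).resolve_left hk

theorem exteriorPower_eq_bot_of_finrank_lt {k : ℕ} (hk : Module.finrank K W < k) :
    ⋀[K]^k W = ⊥ := by
  rw [← Submodule.finrank_eq_zero, exteriorPower.finrank_eq, Nat.choose_eq_zero_of_lt hk]

theorem eq_zero_of_forall_mul_eq_zero {k l : ℕ} (hW : Module.finrank K W = k + l)
    (hk : (k.factorial : K) ≠ 0) {x : ExteriorAlgebra K W} (hx : x ∈ ⋀[K]^k W)
    (h : ∀ y ∈ ⋀[K]^l W, x * y = 0) : x = 0 := by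
  induction k generalizing l x with
  | zero =>
    obtain ⟨r, rfl⟩ : ∃ r, algebraMap K (ExteriorAlgebra K W) r = x := by
      simpa [Submodule.mem_one] using hx
    have hl : ⋀[K]^l W ≠ ⊥ := by
      rw [← Submodule.one_le_finrank_iff, exteriorPower.finrank_eq, hW, zero_add, Nat.choose_self]
    obtain ⟨y, hy, hy0⟩ := Submodule.exists_mem_ne_zero_of_ne_bot hl
    have hry : r • y = 0 := by rw [Algebra.smul_def, h y hy]
    rw [(smul_eq_zero.1 hry).resolve_right hy0, map_zero]
  | succ k ih =>
    rw [Nat.factorial_succ, Nat.cast_mul, mul_ne_zero_iff] at hk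
    refine eq_zero_of_forall_contractLeft_eq_zero hk.1 hx fun d ↦ ?_
    refine ih (l := l + 1) (by omega) hk.2 (contractLeft_mem_exteriorPower d hx) fun y hy ↦ ?_
    have hxy : x * y = 0 := by
      have hmem : x * y ∈ ⋀[K]^(k + 1 + (l + 1)) W := by
        rw [ExteriorAlgebra.exteriorPower, pow_add]
        exact Submodule.mul_mem_mul hx hy
      rwa [exteriorPower_eq_bot_of_finrank_lt (by omega), Submodule.mem_bot] at hmem
    have hxd : involute x * contractLeft d y = 0 := by
      have hdy := h _ (contractLeft_mem_exteriorPower d hy)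
      rcases involute_eq_or_eq_neg_of_mem_exteriorPower hx with hx' | hx' <;> simp [hx', hdy]
    simpa [hxy, hxd] using (contractLeft_mul d x y).symm

theorem mul_self_ne_zero_of_forall_mul_ι_eq_zero [Nontrivial W] (h2 : (2 : K) ≠ 0)
    {ω : ExteriorAlgebra K W} (hω : ω ∈ ⋀[K]^2 W)
    (hinj : ∀ v, ω * ExteriorAlgebra.ι K v = 0 → v = 0) : ω * ω ≠ 0 := by
  intro hsq
  have hω0 : ω = 0 := by
    refine eq_zero_of_forall_contractLeft_eq_zero (mod_cast h2) hω fun d ↦ ?_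
    obtain ⟨v, hv⟩ : contractLeft d ω ∈ LinearMap.range (ExteriorAlgebra.ι K) := by
      simpa using contractLeft_mem_exteriorPower (k := 1) d hω
    have hωd := contractLeft_mul_self_of_mem_even d (exteriorPower_le_evenOdd 2 hω)
    rw [hsq, map_zero, ← hv] at hωd
    have hωv : ω * ExteriorAlgebra.ι K v = 0 := (smul_eq_zero.1 hωd.symm).resolve_left h2
    rw [← hv, hinj v hωv, map_zero]
  obtain ⟨v, hv⟩ := exists_ne (0 : W)
  exact hv (hinj v (by rw [hω0, zero_mul]))

theorem injective_of_apply_eq_zero_imp_mul_eq_zero {k l : ℕ} (hW : Module.finrank K W = k + l)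
    (hk : (k.factorial : K) ≠ 0) {B : ⋀[K]^k W →ₗ[K] ⋀[K]^l W →ₗ[K] K}
    (hB : ∀ x y, B x y = 0 → (x * y : ExteriorAlgebra K W) = 0) : Function.Injective B := by
  refine (injective_iff_map_eq_zero B).2 fun x hx ↦ Subtype.ext ?_
  exact eq_zero_of_forall_mul_eq_zero hW hk x.2 fun y hy ↦ hB x ⟨y, hy⟩ (by simp [hx])

theorem injective_of_ne_zero_of_exteriorPower_finrank {n : ℕ} (hW : Module.finrank K W = n)
    {θ : ⋀[K]^n W →ₗ[K] K} (hθ : θ ≠ 0) : Function.Injective θ := by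
  have : IsSimpleModule K (⋀[K]^n W) := by
    rw [isSimpleModule_iff_finrank_eq_one, exteriorPower.finrank_eq, hW, Nat.choose_self]
  exact LinearMap.injective_of_ne_zero hθ

end Field

section Bilinear

variable {K V : Type*} [Field K] [AddCommGroup V] [Module K V]

theorem forall_mem_ker_apply_eq_zero_iff {B : V →ₗ[K] V →ₗ[K] K} (hB : Function.Injective B)
    {ω x : V} : (∀ s ∈ LinearMap.ker (B ω), B x s = 0) ↔ x ∈ Submodule.span K {ω} := by
  constructor
  · intro h
    have hx : B x ∈ Submodule.span K (Set.range fun _ : Unit ↦ B ω) :=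
      mem_span_of_iInf_ker_le_ker (by simpa [SetLike.le_def] using h)
    rw [Set.range_const, Submodule.mem_span_singleton] at hx
    obtain ⟨c, hc⟩ := hx
    exact Submodule.mem_span_singleton.2 ⟨c, hB (by rw [map_smul, hc])⟩
  · intro hx s hs
    obtain ⟨c, rfl⟩ := Submodule.mem_span_singleton.1 hx
    rw [map_smul, LinearMap.smul_apply, LinearMap.mem_ker.1 hs, smul_zero]

end Bilinear

/-- For a symplectic form `α` on the 4-dimensional space `W`, with `α̃ : ⋀²W → K` the induced
functional (`α̃(v ∧ w) = α(v,w)`) and `S = ker α̃`: `S` is 5-dimensional, the restriction of `B`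
to `S` is nondegenerate, the `B`-orthogonal complement `S^⊥` is 1-dimensional, and `⋀²W` is the
internal direct sum of `S` and `S^⊥`. -/
theorem stmt_8 (K : Type*) [Field K] (hK2 : (2 : K) ≠ 0)
    (W : Type*) [AddCommGroup W] [Module K W] [FiniteDimensional K W]
    (hW : Module.finrank K W = 4)
    (wedge : ⋀[K]^2 W →ₗ[K] ⋀[K]^2 W →ₗ[K] ⋀[K]^4 W)
    (hwedge : ∀ x y : ⋀[K]^2 W,
      (wedge x y : ExteriorAlgebra K W) = (x : ExteriorAlgebra K W) * (y : ExteriorAlgebra K W))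
    (θ : ⋀[K]^4 W →ₗ[K] K) (hθ : θ ≠ 0)
    (B : ⋀[K]^2 W →ₗ[K] ⋀[K]^2 W →ₗ[K] K)
    (hB : ∀ x y : ⋀[K]^2 W, B x y = θ (wedge x y))
    (α : W →ₗ[K] W →ₗ[K] K)
    (hαalt : ∀ v, α v v = 0) (hαnd : ∀ v, (∀ w, α v w = 0) → v = 0)
    (αt : ⋀[K]^2 W →ₗ[K] K)
    (hαt : ∀ (x : ⋀[K]^2 W) (v w : W),
      (x : ExteriorAlgebra K W) = ExteriorAlgebra.ι K v * ExteriorAlgebra.ι K w →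
      αt x = α v w)
    (Sperp : Submodule K (⋀[K]^2 W))
    (hSperp : ∀ x : ⋀[K]^2 W, x ∈ Sperp ↔ ∀ s ∈ LinearMap.ker αt, B x s = 0) :
    Module.finrank K (LinearMap.ker αt) = 5 ∧
    (∀ s ∈ LinearMap.ker αt, (∀ s' ∈ LinearMap.ker αt, B s s' = 0) → s = 0) ∧
    Module.finrank K Sperp = 1 ∧
    IsCompl (LinearMap.ker αt) Sperp := by
  have hB0 (x y : ⋀[K]^2 W) : B x y = 0 ↔ (x * y : ExteriorAlgebra K W) = 0 := by
    rw [hB, map_eq_zero_iff θ (injective_of_ne_zero_of_exteriorPower_finrank hW hθ), ← hwedge,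
      ZeroMemClass.coe_eq_zero]
  have hBinj : Function.Injective B :=
    injective_of_apply_eq_zero_imp_mul_eq_zero hW (by simpa using hK2) fun x y ↦ (hB0 x y).1
  obtain ⟨ω, rfl⟩ : ∃ ω, B ω = αt :=
    (LinearMap.injective_iff_surjective_of_finrank_eq_finrank
      Subspace.dual_finrank_eq.symm).1 hBinj αt
  have hωinj (v : W) (hv : (ω : ExteriorAlgebra K W) * ExteriorAlgebra.ι K v = 0) : v = 0 := by
    refine hαnd v fun w ↦ ?_
    rw [← hαt (exteriorPower.ιMulti K 2 ![v, w]) v w (by simp [ExteriorAlgebra.ιMulti_apply]), hB0]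
    simp [ExteriorAlgebra.ιMulti_apply, ← mul_assoc, hv]
  have : Nontrivial W := Module.nontrivial_of_finrank_pos (R := K) (by omega)
  have hωω : B ω ω ≠ 0 :=
    mt (hB0 ω ω).1 (mul_self_ne_zero_of_forall_mul_ι_eq_zero hK2 ω.2 hωinj)
  obtain rfl : Sperp = Submodule.span K {ω} :=
    Submodule.ext fun x ↦ (hSperp x).trans (forall_mem_ker_apply_eq_zero_iff hBinj)
  have hcompl : IsCompl (LinearMap.ker (B ω)) (Submodule.span K {ω}) :=
    LinearMap.orthogonal_span_singleton_eq_to_lin_ker (B := B) ω ▸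
      (LinearMap.isCompl_span_singleton_orthogonal hωω).symm
  have hker := Module.Dual.finrank_ker_add_one_of_ne_zero (f := B ω) fun h ↦ hωω (by simp [h])
  rw [exteriorPower.finrank_eq, hW] at hker
  exact ⟨Nat.succ_injective hker,
    fun s hs h ↦ Submodule.disjoint_def.1 hcompl.disjoint s hs ((hSperp s).2 h),
    finrank_span_singleton fun h ↦ hωω (by simp [h]), hcompl⟩
end

section
/- A 3-dimensional subspace U ⊆ ⋀²W is totally isotropic for B if and only if either U = span{v ∧ w : v, w ∈ F} for some 3-dimensional subspace F ⊆ W, or U = span{v ∧ w : v ∈ N, w ∈ W} for some 1-dimensional subspace N ⊆ W; moreover in the first case F is uniquely determined by U, and in the second case N is uniquely determined by U. -/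
/-!
In dimension four every bivector has the form `u = a ∧ b + c ∧ d`, and then `u ∧ u` is
`2 (a ∧ b ∧ c ∧ d)`; as `2 ≠ 0`, isotropic bivectors are decomposable. An isotropic subspace thus
consists of planes of `W` any two of which meet in a nonzero vector. Choose two independent members
`e ∧ x` and `e ∧ y`. A plane that meets both of theirs either contains `e` or lies in
`span {e, x, y}`, so `U` is covered by the two subspaces `⋀²(span {e, x, y})` and `e ∧ W`, hence is
contained in one of them, and a dimension count gives equality. Conversely, four vectors of which
all lie in `F`, or two lie in `N`, are dependent.

`F` and `N` are recovered from `U` by contraction: a functional vanishing on `F` contracts `⋀²F`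
to zero, and one vanishing on `N` contracts `N ∧ W` into `N`.
-/

open Module Submodule

section CommRing

variable {R M N : Type*} [CommRing R] [AddCommGroup M] [Module R M] [AddCommGroup N] [Module R N]

variable (R) in
/-- The wedge product `v ∧ w` of two vectors as a bilinear map into the exterior square. The
submodule spanned by the `v ∧ w` with `v ∈ A` and `w ∈ B` is then `map₂ (vectorWedge R) A B`; in
particular `⋀²F` and `N ∧ W` are `map₂ (vectorWedge K) F F` and `map₂ (vectorWedge K) N ⊤`. -/
noncomputable def vectorWedge : M →ₗ[R] M →ₗ[R] ⋀[R]^2 M :=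
  LinearMap.mk₂ R (fun v w ↦ exteriorPower.ιMulti R 2 ![v, w])
    (fun _ _ _ ↦ by ext; simp [ExteriorAlgebra.ιMulti_apply, add_mul])
    (fun _ _ _ ↦ by ext; simp [ExteriorAlgebra.ιMulti_apply])
    (fun _ _ _ ↦ by ext; simp [ExteriorAlgebra.ιMulti_apply, mul_add])
    (fun _ _ _ ↦ by ext; simp [ExteriorAlgebra.ιMulti_apply])

theorem coe_vectorWedge (v w : M) :
    (vectorWedge R v w : ExteriorAlgebra R M) = ExteriorAlgebra.ι R v * ExteriorAlgebra.ι R w := by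
  simp [vectorWedge, ExteriorAlgebra.ιMulti_apply]

theorem isAlt_vectorWedge : (vectorWedge R : M →ₗ[R] M →ₗ[R] ⋀[R]^2 M).IsAlt := fun v ↦ by
  ext; simp [coe_vectorWedge]

theorem commute_coe_vectorWedge_ι (v w x : M) :
    Commute (vectorWedge R v w : ExteriorAlgebra R M) (ExteriorAlgebra.ι R x) := by
  have hanti (y : M) : ExteriorAlgebra.ι R y * ExteriorAlgebra.ι R x =
      -(ExteriorAlgebra.ι R x * ExteriorAlgebra.ι R y) :=
    eq_neg_of_add_eq_zero_left (ExteriorAlgebra.ι_add_mul_swap y x)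
  rw [Commute, SemiconjBy, coe_vectorWedge, mul_assoc, hanti w, mul_neg, ← mul_assoc, hanti v,
    neg_mul, neg_neg, mul_assoc]

theorem commute_coe_vectorWedge (v w x y : M) :
    Commute (vectorWedge R v w : ExteriorAlgebra R M) (vectorWedge R x y : ExteriorAlgebra R M) :=
  coe_vectorWedge (R := R) x y ▸
    (commute_coe_vectorWedge_ι v w x).mul_right (commute_coe_vectorWedge_ι v w y)

theorem coe_vectorWedge_mul_self (v w : M) :
    (vectorWedge R v w : ExteriorAlgebra R M) * vectorWedge R v w = 0 := by
  nth_rw 2 [coe_vectorWedge]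
  rw [← mul_assoc, (commute_coe_vectorWedge_ι v w v).eq, coe_vectorWedge, ← mul_assoc,
    ExteriorAlgebra.ι_sq_zero, zero_mul, zero_mul]

theorem map_vectorWedge (f : M →ₗ[R] N) (v w : M) :
    exteriorPower.map 2 f (vectorWedge R v w) = vectorWedge R (f v) (f w) := by
  have hcomp : f ∘ ![v, w] = ![f v, f w] := (FinVec.map_eq _ _).symm
  simp [vectorWedge, exteriorPower.map_apply_ιMulti, hcomp]

theorem map₂_vectorWedge_top : map₂ (vectorWedge R) (⊤ : Submodule R M) ⊤ = ⊤ := by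
  rw [eq_top_iff, ← exteriorPower.ιMulti_span, span_le]
  rintro _ ⟨v, rfl⟩
  have hv : exteriorPower.ιMulti R 2 v = vectorWedge R (v 0) (v 1) :=
    congrArg _ (FinVec.etaExpand_eq v).symm
  exact hv ▸ apply_mem_map₂ _ mem_top mem_top

theorem map₂_vectorWedge_comm (A B : Submodule R M) :
    map₂ (vectorWedge R) A B = map₂ (vectorWedge R) B A := by
  have h (A B : Submodule R M) : map₂ (vectorWedge R) A B ≤ map₂ (vectorWedge R) B A :=
    map₂_le.2 fun a ha b hb ↦ by
      rw [← isAlt_vectorWedge.neg]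
      exact neg_mem (apply_mem_map₂ _ hb ha)
  exact (h A B).antisymm (h B A)

theorem map₂_vectorWedge_sup_eq_top {A B : Submodule R M} (h : A ⊔ B = ⊤) :
    map₂ (vectorWedge R) A ⊤ ⊔ map₂ (vectorWedge R) B B = ⊤ := by
  refine eq_top_iff.2 ?_
  calc (⊤ : Submodule R (⋀[R]^2 M))
    _ = map₂ (vectorWedge R) A ⊤ ⊔ map₂ (vectorWedge R) B (A ⊔ B) := by
      rw [h, ← map₂_sup_left, h, map₂_vectorWedge_top]
    _ = map₂ (vectorWedge R) A ⊤ ⊔ (map₂ (vectorWedge R) A B ⊔ map₂ (vectorWedge R) B B) := by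
      rw [map₂_sup_right, map₂_vectorWedge_comm B A]
    _ ≤ map₂ (vectorWedge R) A ⊤ ⊔ map₂ (vectorWedge R) B B :=
      sup_le le_sup_left (sup_le_sup_right (map₂_le_map₂_right le_top) _)

theorem map₂_vectorWedge_self_eq_range (F : Submodule R M) :
    map₂ (vectorWedge R) F F = LinearMap.range (exteriorPower.map 2 F.subtype) := by
  apply le_antisymm
  · exact map₂_le.2 fun v hv w hw ↦ ⟨vectorWedge R ⟨v, hv⟩ ⟨w, hw⟩, map_vectorWedge ..⟩
  · rw [LinearMap.range_eq_map, ← map₂_vectorWedge_top, map_map₂]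
    exact map₂_le.2 fun v _ w _ ↦
      (map_vectorWedge F.subtype v w).symm ▸ apply_mem_map₂ _ v.2 w.2

theorem span_setOf_coe_eq_ι_mul_ι (A B : Submodule R M) :
    span R {x : ⋀[R]^2 M | ∃ v ∈ A, ∃ w ∈ B,
      (x : ExteriorAlgebra R M) = ExteriorAlgebra.ι R v * ExteriorAlgebra.ι R w} =
    map₂ (vectorWedge R) A B := by
  simp only [map₂_eq_span_image2, Set.image2, ← coe_vectorWedge, SetLike.coe_eq_coe,
    SetLike.mem_coe, eq_comm]

theorem span_setOf_coe_eq_ι_mul_ι_top (A : Submodule R M) :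
    span R {x : ⋀[R]^2 M | ∃ v ∈ A, ∃ w : M,
      (x : ExteriorAlgebra R M) = ExteriorAlgebra.ι R v * ExteriorAlgebra.ι R w} =
    map₂ (vectorWedge R) A ⊤ := by
  simpa only [mem_top, true_and] using span_setOf_coe_eq_ι_mul_ι A ⊤

theorem contractLeft_vectorWedge (φ : Dual R M) (v w : M) :
    CliffordAlgebra.contractLeft φ (vectorWedge R v w : ExteriorAlgebra R M) =
      ExteriorAlgebra.ι R (φ v • w - φ w • v) := by
  rw [coe_vectorWedge, ExteriorAlgebra.ι, CliffordAlgebra.contractLeft_ι_mul,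
    CliffordAlgebra.contractLeft_ι, map_sub, map_smul, map_smul, ← Algebra.commutes,
    ← Algebra.smul_def]

theorem contractLeft_eq_zero_of_mem_map₂_vectorWedge {F : Submodule R M} {φ : Dual R M}
    (hφ : F ≤ LinearMap.ker φ) {x : ⋀[R]^2 M} (hx : x ∈ map₂ (vectorWedge R) F F) :
    CliffordAlgebra.contractLeft φ (x : ExteriorAlgebra R M) = 0 := by
  have hle : map₂ (vectorWedge R) F F ≤
      LinearMap.ker (CliffordAlgebra.contractLeft φ ∘ₗ (⋀[R]^2 M).subtype) :=
    map₂_le.2 fun v hv w hw ↦ by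
      simp [contractLeft_vectorWedge, LinearMap.mem_ker.1 (hφ hv), LinearMap.mem_ker.1 (hφ hw)]
  exact hle hx

theorem contractLeft_mem_map_ι_of_mem_map₂_vectorWedge {N : Submodule R M} {φ : Dual R M}
    (hφ : N ≤ LinearMap.ker φ) {x : ⋀[R]^2 M} (hx : x ∈ map₂ (vectorWedge R) N ⊤) :
    CliffordAlgebra.contractLeft φ (x : ExteriorAlgebra R M) ∈ N.map (ExteriorAlgebra.ι R) := by
  have hle : map₂ (vectorWedge R) N ⊤ ≤ (N.map (ExteriorAlgebra.ι R)).comap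
      (CliffordAlgebra.contractLeft φ ∘ₗ (⋀[R]^2 M).subtype) :=
    map₂_le.2 fun v hv w _ ↦ by
      rw [mem_comap, LinearMap.comp_apply, subtype_apply, contractLeft_vectorWedge,
        LinearMap.mem_ker.1 (hφ hv), zero_smul, zero_sub]
      exact mem_map_of_mem (neg_mem (N.smul_mem _ hv))
  exact hle hx

end CommRing

section Field

variable {K W : Type*} [Field K] [AddCommGroup W] [Module K W]

theorem ιMulti_ne_zero_of_linearIndependent {n : ℕ} {v : Fin n → W} (hv : LinearIndependent K v) :
    ExteriorAlgebra.ιMulti K n v ≠ 0 := by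
  have h := (exteriorPower.ιMulti_family_linearIndependent_field n hv).ne_zero
    (Set.powersetCard.ofFinEmbEquiv (RelEmbedding.refl _))
  rwa [exteriorPower.ιMulti_family, Equiv.symm_apply_apply, ← Subtype.coe_ne_coe] at h

theorem coe_vectorWedge_mul_coe_vectorWedge_eq_zero_iff {a b c d : W} :
    (vectorWedge K a b : ExteriorAlgebra K W) * vectorWedge K c d = 0 ↔
      ¬LinearIndependent K ![a, b, c, d] := by
  have hmul : (vectorWedge K a b : ExteriorAlgebra K W) * vectorWedge K c d =
      ExteriorAlgebra.ιMulti K 4 ![a, b, c, d] := by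
    simp [coe_vectorWedge, ExteriorAlgebra.ιMulti_apply, mul_assoc]
  rw [hmul]
  exact ⟨fun h hli ↦ ιMulti_ne_zero_of_linearIndependent hli h,
    (ExteriorAlgebra.ιMulti K 4).map_linearDependent _⟩

theorem linearIndependent_of_vectorWedge_ne_zero {a b : W} (h : vectorWedge K a b ≠ 0) :
    LinearIndependent K ![a, b] := by
  contrapose! h
  exact (exteriorPower.ιMulti K 2).map_linearDependent _ h

theorem not_linearIndependent_of_mem_of_finrank_lt {n : ℕ} {F : Submodule K W}
    [FiniteDimensional K F] (hF : finrank K F < n) {v : Fin n → W} (hv : ∀ i, v i ∈ F) :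
    ¬LinearIndependent K v := fun h ↦ by
  have hF' : LinearIndependent K fun i ↦ (⟨v i, hv i⟩ : F) := h.of_comp F.subtype
  exact hF.not_ge (by simpa using hF'.fintype_card_le_finrank)

/-- A bivector is decomposable if it is a single wedge product of two vectors; zero counts as
decomposable. -/
def IsDecomposable (u : ⋀[K]^2 W) : Prop :=
  ∃ v w : W, u = vectorWedge K v w

theorem exists_vectorWedge_eq_of_mem_span_pair {a b e : W} (he : e ∈ span K {a, b})
    (he0 : e ≠ 0) : ∃ x, vectorWedge K a b = vectorWedge K e x := by
  obtain ⟨α, β, rfl⟩ := mem_span_pair.1 he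
  by_cases hα : α = 0
  · have hβ : β ≠ 0 := fun hβ ↦ he0 (by simp [hα, hβ])
    refine ⟨-(β⁻¹ • a), ?_⟩
    simp [hα, smul_smul, hβ, isAlt_vectorWedge.neg]
  · refine ⟨α⁻¹ • b, ?_⟩
    simp [smul_smul, hα, isAlt_vectorWedge.self_eq_zero]

theorem linearIndependent_of_disjoint_span_pair {a b c d : W} (hab : LinearIndependent K ![a, b])
    (hcd : LinearIndependent K ![c, d]) (h : Disjoint (span K {a, b}) (span K {c, d})) :
    LinearIndependent K ![a, b, c, d] := by
  have hsum : LinearIndependent K (Sum.elim ![a, b] ![c, d]) :=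
    hab.sum_type hcd (by simpa [Set.pair_comm] using h)
  have hcomp : ![a, b, c, d] ∘ finSumFinEquiv (m := 2) (n := 2) = Sum.elim ![a, b] ![c, d] := by
    ext (i | i) <;> fin_cases i <;> rfl
  rwa [← hcomp, linearIndependent_equiv] at hsum

theorem exists_ne_zero_mem_span_pair_of_not_linearIndependent {a b c d : W}
    (hab : vectorWedge K a b ≠ 0) (hcd : vectorWedge K c d ≠ 0)
    (h : ¬LinearIndependent K ![a, b, c, d]) :
    ∃ e ≠ 0, e ∈ span K {a, b} ∧ e ∈ span K {c, d} := by
  by_contra! hdisj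
  exact h (linearIndependent_of_disjoint_span_pair (linearIndependent_of_vectorWedge_ne_zero hab)
    (linearIndependent_of_vectorWedge_ne_zero hcd)
    (disjoint_def.2 fun e h₁ h₂ ↦ by_contra fun h₀ ↦ hdisj e h₀ h₁ h₂))

theorem exists_common_factor_of_not_linearIndependent {a b c d : W}
    (h : ¬LinearIndependent K ![a, b, c, d]) :
    ∃ e x y, vectorWedge K a b = vectorWedge K e x ∧ vectorWedge K c d = vectorWedge K e y := by
  by_cases hab : vectorWedge K a b = 0
  · exact ⟨c, 0, d, by simp [hab], rfl⟩
  by_cases hcd : vectorWedge K c d = 0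
  · exact ⟨a, b, 0, rfl, by simp [hcd]⟩
  obtain ⟨e, he0, he, he'⟩ := exists_ne_zero_mem_span_pair_of_not_linearIndependent hab hcd h
  obtain ⟨x, hx⟩ := exists_vectorWedge_eq_of_mem_span_pair he he0
  obtain ⟨y, hy⟩ := exists_vectorWedge_eq_of_mem_span_pair he' he0
  exact ⟨e, x, y, hx, hy⟩

theorem isDecomposable_add_of_not_linearIndependent {a b c d : W}
    (h : ¬LinearIndependent K ![a, b, c, d]) :
    IsDecomposable (vectorWedge K a b + vectorWedge K c d) := by
  obtain ⟨e, x, y, hx, hy⟩ := exists_common_factor_of_not_linearIndependent h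
  exact ⟨e, x + y, by rw [hx, hy, map_add]⟩

theorem isDecomposable_of_finrank_le_three [FiniteDimensional K W] (hW : finrank K W ≤ 3)
    (u : ⋀[K]^2 W) : IsDecomposable u := by
  have hu : u ∈ map₂ (vectorWedge K) (⊤ : Submodule K W) ⊤ := by
    rw [map₂_vectorWedge_top]
    exact mem_top
  rw [map₂_eq_span_image2] at hu
  induction hu using span_induction with
  | mem _ h =>
    obtain ⟨v, -, w, -, rfl⟩ := h
    exact ⟨v, w, rfl⟩
  | zero => exact ⟨0, 0, by simp⟩
  | add _ _ _ _ hx hy =>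
    obtain ⟨a, b, rfl⟩ := hx
    obtain ⟨c, d, rfl⟩ := hy
    refine isDecomposable_add_of_not_linearIndependent (K := K) fun hli ↦ ?_
    have hcard := hli.fintype_card_le_finrank
    rw [Fintype.card_fin] at hcard
    omega
  | smul r _ _ hx =>
    obtain ⟨a, b, rfl⟩ := hx
    exact ⟨r • a, b, by simp⟩

theorem exists_eq_vectorWedge_add_vectorWedge (hW : finrank K W = 4) (u : ⋀[K]^2 W) :
    ∃ a b c d : W, u = vectorWedge K a b + vectorWedge K c d := by
  have : FiniteDimensional K W := .of_finrank_pos (by omega)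
  have : Nontrivial W := nontrivial_of_finrank_pos (R := K) (by omega)
  obtain ⟨e, he⟩ := exists_ne (0 : W)
  obtain ⟨F, hF⟩ := Submodule.exists_isCompl (span K {e})
  have hF3 : finrank K F = 3 := by
    have hadd := finrank_add_eq_of_isCompl hF
    rw [finrank_span_singleton he] at hadd
    omega
  obtain ⟨x, hx, y, hy, rfl⟩ := mem_sup.1
    (map₂_vectorWedge_sup_eq_top hF.sup_eq_top ▸ mem_top (x := u))
  rw [map₂_span_singleton_eq_map] at hx
  rw [map₂_vectorWedge_self_eq_range] at hy
  obtain ⟨w, -, rfl⟩ := hx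
  obtain ⟨y, rfl⟩ := hy
  obtain ⟨c, d, rfl⟩ := isDecomposable_of_finrank_le_three hF3.le y
  exact ⟨e, w, c, d, by rw [map_vectorWedge, F.subtype_apply, F.subtype_apply]⟩

theorem isDecomposable_of_coe_mul_self_eq_zero (hK2 : (2 : K) ≠ 0) (hW : finrank K W = 4)
    {u : ⋀[K]^2 W} (hu : (u : ExteriorAlgebra K W) * u = 0) : IsDecomposable u := by
  obtain ⟨a, b, c, d, rfl⟩ := exists_eq_vectorWedge_add_vectorWedge hW u
  refine isDecomposable_add_of_not_linearIndependent
    (coe_vectorWedge_mul_coe_vectorWedge_eq_zero_iff.1 ?_)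
  rw [coe_add, add_mul, mul_add, mul_add, coe_vectorWedge_mul_self, coe_vectorWedge_mul_self,
    (commute_coe_vectorWedge c d a b).eq, zero_add, add_zero, ← two_smul K] at hu
  exact (smul_eq_zero.1 hu).resolve_left hK2

theorem linearIndependent_of_vectorWedge_pair {e b c : W}
    (h : LinearIndependent K ![vectorWedge K e b, vectorWedge K e c]) :
    LinearIndependent K ![e, b, c] := by
  have he : e ≠ 0 := by
    rintro rfl
    simpa using h.ne_zero 0
  have hcomp : vectorWedge K e ∘ ![b, c] = ![vectorWedge K e b, vectorWedge K e c] :=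
    (FinVec.map_eq _ _).symm
  rw [← hcomp] at h
  exact linearIndependent_finCons.2 ⟨h.of_comp _, fun hmem ↦
    he (disjoint_def.1 (range_ker_disjoint h) e hmem (isAlt_vectorWedge.self_eq_zero e))⟩

theorem mem_span_singleton_of_mem_span_pair_of_mem_span_pair {e b c f : W}
    (h : LinearIndependent K ![e, b, c]) (hb : f ∈ span K {e, b}) (hc : f ∈ span K {e, c}) :
    f ∈ span K {e} := by
  obtain ⟨α, β, rfl⟩ := mem_span_pair.1 hb
  obtain ⟨γ, δ, heq⟩ := mem_span_pair.1 hc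
  have hβ : β = 0 := by
    refine Fintype.linearIndependent_iff.1 h ![α - γ, β, -δ] ?_ 1
    simp only [Fin.sum_univ_three, Matrix.cons_val]
    linear_combination (norm := module) -heq
  rw [hβ, zero_smul, add_zero]
  exact smul_mem _ _ (mem_span_singleton_self e)

theorem mem_map₂_vectorWedge_span_of_mul_eq_zero {e b c : W}
    (h : LinearIndependent K ![vectorWedge K e b, vectorWedge K e c])
    {u : ⋀[K]^2 W} (hu : IsDecomposable u)
    (hub : (u : ExteriorAlgebra K W) * vectorWedge K e b = 0)
    (huc : (u : ExteriorAlgebra K W) * vectorWedge K e c = 0) :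
    u ∈ map₂ (vectorWedge K) (span K {e, b, c}) (span K {e, b, c}) ∨
      u ∈ map₂ (vectorWedge K) (span K {e}) ⊤ := by
  have hebc := linearIndependent_of_vectorWedge_pair h
  obtain ⟨x, y, rfl⟩ := hu
  by_cases hxy : vectorWedge K x y = 0
  · exact .inl (hxy ▸ zero_mem _)
  by_cases he : e ∈ span K {x, y}
  · obtain ⟨z, hz⟩ := exists_vectorWedge_eq_of_mem_span_pair he (hebc.ne_zero 0)
    exact .inr (hz ▸ apply_mem_map₂ _ (mem_span_singleton_self e) mem_top)
  obtain ⟨f, hf0, hf, hfb⟩ := exists_ne_zero_mem_span_pair_of_not_linearIndependent hxy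
    (h.ne_zero 0) (coe_vectorWedge_mul_coe_vectorWedge_eq_zero_iff.1 hub)
  obtain ⟨g, hg0, hg, hgc⟩ := exists_ne_zero_mem_span_pair_of_not_linearIndependent hxy
    (h.ne_zero 1) (coe_vectorWedge_mul_coe_vectorWedge_eq_zero_iff.1 huc)
  have hfg : LinearIndependent K ![f, g] := by
    refine (LinearIndependent.pair_iff' hf0).2 fun t htg ↦ he ?_
    have hge : g ∈ span K {e} := mem_span_singleton_of_mem_span_pair_of_mem_span_pair hebc
      (htg ▸ smul_mem _ t hfb) hgc
    obtain ⟨r, rfl⟩ := mem_span_singleton.1 hge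
    exact (smul_mem_iff _ (left_ne_zero_of_smul hg0)).1 hg
  have hspan : span K {f, g} = span K {x, y} := by
    have := FiniteDimensional.span_of_finite K (Set.toFinite {x, y})
    refine eq_of_le_of_finrank_le (span_le.2 (by simp [Set.pair_subset_iff, hf, hg])) ?_
    have h₁ := finrank_span_eq_card hfg
    have h₂ := finrank_span_eq_card (linearIndependent_of_vectorWedge_ne_zero hxy)
    rw [Matrix.range_cons_cons_empty] at h₁ h₂
    rw [h₁, h₂]
  have hle : span K {x, y} ≤ span K {e, b, c} :=
    hspan ▸ span_le.2 (Set.pair_subset (span_mono (by grind) hfb) (span_mono (by grind) hgc))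
  exact .inl (apply_mem_map₂ _ (hle (mem_span_pair.2 ⟨1, 0, by simp⟩))
    (hle (mem_span_pair.2 ⟨0, 1, by simp⟩)))

theorem exists_linearIndependent_vectorWedge_mem {U : Submodule K (⋀[K]^2 W)}
    (hU : 1 < finrank K U) (hdec : ∀ u ∈ U, IsDecomposable u)
    (hmul : ∀ u ∈ U, ∀ u' ∈ U, (u : ExteriorAlgebra K W) * u' = 0) :
    ∃ e x y, vectorWedge K e x ∈ U ∧ vectorWedge K e y ∈ U ∧
      LinearIndependent K ![vectorWedge K e x, vectorWedge K e y] := by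
  have : Nontrivial U := nontrivial_of_finrank_pos (R := K) (by omega)
  obtain ⟨⟨u, hu⟩, hu0⟩ := exists_ne (0 : U)
  obtain ⟨⟨u', hu'⟩, hli⟩ := exists_linearIndependent_pair_of_one_lt_finrank (M := U) hU hu0
  obtain ⟨a, b, rfl⟩ := hdec u hu
  obtain ⟨c, d, rfl⟩ := hdec u' hu'
  obtain ⟨e, x, y, hx, hy⟩ := exists_common_factor_of_not_linearIndependent
    (coe_vectorWedge_mul_coe_vectorWedge_eq_zero_iff.1 (hmul _ hu _ hu'))
  refine ⟨e, x, y, hx ▸ hu, hy ▸ hu', ?_⟩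
  rw [← hx, ← hy]
  exact LinearIndependent.pair_iff.2 fun s t h ↦
    LinearIndependent.pair_iff.1 hli s t (Subtype.ext h)

theorem exists_le_map₂_vectorWedge_of_isDecomposable {U : Submodule K (⋀[K]^2 W)}
    (hU : 1 < finrank K U) (hdec : ∀ u ∈ U, IsDecomposable u)
    (hmul : ∀ u ∈ U, ∀ u' ∈ U, (u : ExteriorAlgebra K W) * u' = 0) :
    (∃ F : Submodule K W, finrank K F = 3 ∧ U ≤ map₂ (vectorWedge K) F F) ∨
      ∃ N : Submodule K W, finrank K N = 1 ∧ U ≤ map₂ (vectorWedge K) N ⊤ := by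
  obtain ⟨e, x, y, hx, hy, hli⟩ := exists_linearIndependent_vectorWedge_mem hU hdec hmul
  have hexy := linearIndependent_of_vectorWedge_pair hli
  have hcover : (U : Set (⋀[K]^2 W)) ⊆
      map₂ (vectorWedge K) (span K {e, x, y}) (span K {e, x, y}) ∪
        map₂ (vectorWedge K) (span K {e}) ⊤ :=
    fun u hu ↦ mem_map₂_vectorWedge_span_of_mul_eq_zero hli (hdec u hu) (hmul u hu _ hx)
      (hmul u hu _ hy)
  refine (AddSubgroupClass.subset_union.1 hcover).imp (fun h ↦ ⟨_, ?_, h⟩) fun h ↦ ⟨_, ?_, h⟩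
  · have hcard := finrank_span_eq_card hexy
    rwa [Matrix.range_cons, Matrix.range_cons_cons_empty, Set.singleton_union,
      Fintype.card_fin] at hcard
  · exact finrank_span_singleton (hexy.ne_zero 0)

theorem finrank_map₂_vectorWedge_self_le (F : Submodule K W) [FiniteDimensional K F] :
    finrank K (map₂ (vectorWedge K) F F) ≤ (finrank K F).choose 2 := by
  rw [map₂_vectorWedge_self_eq_range, ← exteriorPower.finrank_eq K 2]
  exact LinearMap.finrank_range_le _

theorem finrank_map₂_vectorWedge_top_lt [FiniteDimensional K W] {N : Submodule K W}
    (hN : finrank K N = 1) : finrank K (map₂ (vectorWedge K) N ⊤) < finrank K W := by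
  obtain ⟨e, he, he0⟩ := exists_mem_ne_zero_of_ne_bot (p := N) (by rintro rfl; simp at hN)
  obtain rfl := eq_of_le_of_finrank_eq ((span_singleton_le_iff_mem e N).2 he)
    (hN ▸ finrank_span_singleton he0)
  have hker : LinearMap.ker (vectorWedge K e) ≠ ⊥ := (Submodule.ne_bot_iff _).2
    ⟨e, isAlt_vectorWedge.self_eq_zero e, he0⟩
  rw [map₂_span_singleton_eq_map, ← LinearMap.range_eq_map,
    ← (vectorWedge K e).finrank_range_add_finrank_ker]
  exact Nat.lt_add_of_pos_right (pos_iff_ne_zero.2 (finrank_eq_zero.not.2 hker))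

theorem mul_eq_zero_of_mem_map₂_vectorWedge {A B C D : Submodule K W}
    (h : ∀ a ∈ A, ∀ b ∈ B, ∀ c ∈ C, ∀ d ∈ D, ¬LinearIndependent K ![a, b, c, d])
    {x y : ⋀[K]^2 W} (hx : x ∈ map₂ (vectorWedge K) A B) (hy : y ∈ map₂ (vectorWedge K) C D) :
    (x : ExteriorAlgebra K W) * y = 0 := by
  rw [map₂_eq_span_image2] at hx hy
  induction hx, hy using span_induction₂ with
  | mem_mem _ _ hx hy =>
    obtain ⟨a, ha, b, hb, rfl⟩ := hx
    obtain ⟨c, hc, d, hd, rfl⟩ := hy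
    exact coe_vectorWedge_mul_coe_vectorWedge_eq_zero_iff.2 (h a ha b hb c hc d hd)
  | zero_left | zero_right => simp
  | add_left _ _ _ _ _ _ hx hy => simp [add_mul, hx, hy]
  | add_right _ _ _ _ _ _ hx hy => simp [mul_add, hx, hy]
  | smul_left _ _ _ _ _ h => simp [h]
  | smul_right _ _ _ _ _ h => simp [h]

theorem mul_eq_zero_of_mem_map₂_vectorWedge_self {F : Submodule K W} [FiniteDimensional K F]
    (hF : finrank K F ≤ 3) {x y : ⋀[K]^2 W} (hx : x ∈ map₂ (vectorWedge K) F F)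
    (hy : y ∈ map₂ (vectorWedge K) F F) : (x : ExteriorAlgebra K W) * y = 0 :=
  mul_eq_zero_of_mem_map₂_vectorWedge (fun a ha b hb c hc d hd ↦
    not_linearIndependent_of_mem_of_finrank_lt (Nat.lt_succ_of_le hF)
      (Fin.forall_fin_succ.2 ⟨ha, by simp [Fin.forall_fin_succ, *]⟩)) hx hy

theorem mul_eq_zero_of_mem_map₂_vectorWedge_top {N : Submodule K W} [FiniteDimensional K N]
    (hN : finrank K N ≤ 1) {x y : ⋀[K]^2 W} (hx : x ∈ map₂ (vectorWedge K) N ⊤)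
    (hy : y ∈ map₂ (vectorWedge K) N ⊤) : (x : ExteriorAlgebra K W) * y = 0 := by
  refine mul_eq_zero_of_mem_map₂_vectorWedge (fun a ha b _ c hc d _ hli ↦ ?_) hx hy
  have hac : LinearIndependent K ![a, c] := by
    have h := hli.comp ![0, 2] (by decide)
    convert h using 1
    exact FinVec.map_eq ![a, b, c, d] ![0, 2]
  exact not_linearIndependent_of_mem_of_finrank_lt (Nat.lt_succ_of_le hN)
    (by simp [Fin.forall_fin_succ, *]) hac

theorem le_of_map₂_vectorWedge_self_le {F F' : Submodule K W} (hF : 1 < finrank K F)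
    (h : map₂ (vectorWedge K) F F ≤ map₂ (vectorWedge K) F' F') : F ≤ F' := by
  intro v hv
  by_contra hv'
  obtain ⟨φ, hφv, hφ⟩ := exists_le_ker_of_notMem hv'
  have hspan : F ≤ span K {v} := fun w hw ↦ by
    have hzero := contractLeft_eq_zero_of_mem_map₂_vectorWedge hφ (h (apply_mem_map₂ _ hv hw))
    rw [contractLeft_vectorWedge, ExteriorAlgebra.ι_eq_zero_iff, sub_eq_zero] at hzero
    rw [← smul_mem_iff _ hφv, hzero]
    exact smul_mem _ _ (mem_span_singleton_self v)
  have hle := (finrank_mono hspan).trans (finrank_span_le_card ({v} : Set W))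
  rw [Set.toFinset_singleton, Finset.card_singleton] at hle
  omega

theorem le_of_map₂_vectorWedge_top_le {N N' : Submodule K W}
    (hN' : finrank K N' + 1 < finrank K W)
    (h : map₂ (vectorWedge K) N ⊤ ≤ map₂ (vectorWedge K) N' ⊤) : N ≤ N' := by
  have : FiniteDimensional K W := .of_finrank_pos (by omega)
  intro n hn
  by_contra hn'
  obtain ⟨φ, hφn, hφ⟩ := exists_le_ker_of_notMem hn'
  have htop : N' ⊔ span K {n} = ⊤ := eq_top_iff.2 fun w _ ↦ by
    have hmem := contractLeft_mem_map_ι_of_mem_map₂_vectorWedge hφ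
      (h (apply_mem_map₂ _ hn (mem_top (x := w))))
    rw [contractLeft_vectorWedge, ← mem_comap,
      comap_map_eq_of_injective ExteriorAlgebra.ι_leftInverse.injective] at hmem
    rw [← smul_mem_iff _ hφn, ← sub_add_cancel (φ n • w) (φ w • n)]
    exact add_mem_sup hmem (smul_mem _ _ (mem_span_singleton_self n))
  have hle := finrank_add_le_finrank_add_finrank N' (span K {n})
  have hn1 := finrank_span_le_card (R := K) ({n} : Set W)
  rw [htop, finrank_top] at hle
  rw [Set.toFinset_singleton, Finset.card_singleton] at hn1
  omega

theorem forall_mul_eq_zero_iff_eq_map₂_vectorWedge (hK2 : (2 : K) ≠ 0) (hW : finrank K W = 4)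
    {U : Submodule K (⋀[K]^2 W)} (hU : finrank K U = 3) :
    (∀ u ∈ U, ∀ u' ∈ U, (u : ExteriorAlgebra K W) * u' = 0) ↔
      (∃ F : Submodule K W, finrank K F = 3 ∧ U = map₂ (vectorWedge K) F F) ∨
        ∃ N : Submodule K W, finrank K N = 1 ∧ U = map₂ (vectorWedge K) N ⊤ := by
  have : FiniteDimensional K W := .of_finrank_pos (by omega)
  refine ⟨fun hmul ↦ ?_, ?_⟩
  · refine (exists_le_map₂_vectorWedge_of_isDecomposable (by omega)
      (fun u hu ↦ isDecomposable_of_coe_mul_self_eq_zero hK2 hW (hmul u hu u hu)) hmul).imp ?_ ?_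
    · rintro ⟨F, hF, hle⟩
      refine ⟨F, hF, eq_of_le_of_finrank_le hle ?_⟩
      simpa [hU, hF] using finrank_map₂_vectorWedge_self_le F
    · rintro ⟨N, hN, hle⟩
      refine ⟨N, hN, eq_of_le_of_finrank_le hle ?_⟩
      have hlt := finrank_map₂_vectorWedge_top_lt hN
      omega
  · rintro (⟨F, hF, rfl⟩ | ⟨N, hN, rfl⟩) u hu u' hu'
    · exact mul_eq_zero_of_mem_map₂_vectorWedge_self hF.le hu hu'
    · exact mul_eq_zero_of_mem_map₂_vectorWedge_top hN.le hu hu'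

theorem injective_dual_exteriorPower_of_ne_zero [FiniteDimensional K W] {n : ℕ}
    (hW : finrank K W = n) {θ : ⋀[K]^n W →ₗ[K] K} (hθ : θ ≠ 0) : Function.Injective θ := by
  rw [LinearMap.injective_iff_surjective_of_finrank_eq_finrank
    (by rw [exteriorPower.finrank_eq, hW, n.choose_self, finrank_self])]
  exact LinearMap.surjective hθ

end Field

/-- A 3-dimensional subspace `U ⊆ ⋀²W` is totally isotropic for `B` iff either
`U = ⋀²F = span{v ∧ w : v, w ∈ F}` for a 3-dimensional `F ⊆ W`, or
`U = span{v ∧ w : v ∈ N, w ∈ W}` for a 1-dimensional `N ⊆ W`; moreover `F` (resp. `N`) is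
uniquely determined by `U`. -/
theorem stmt_11 (K : Type*) [Field K] (hK2 : (2 : K) ≠ 0)
    (W : Type*) [AddCommGroup W] [Module K W] [FiniteDimensional K W]
    (hW : Module.finrank K W = 4)
    (wedge : ⋀[K]^2 W →ₗ[K] ⋀[K]^2 W →ₗ[K] ⋀[K]^4 W)
    (hwedge : ∀ x y : ⋀[K]^2 W,
      (wedge x y : ExteriorAlgebra K W) = (x : ExteriorAlgebra K W) * (y : ExteriorAlgebra K W))
    (θ : ⋀[K]^4 W →ₗ[K] K) (hθ : θ ≠ 0)
    (B : ⋀[K]^2 W →ₗ[K] ⋀[K]^2 W →ₗ[K] K)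
    (hB : ∀ x y : ⋀[K]^2 W, B x y = θ (wedge x y))
    (U : Submodule K (⋀[K]^2 W)) (hU : Module.finrank K U = 3) :
    ((∀ u ∈ U, ∀ u' ∈ U, B u u' = 0) ↔
      ((∃ F : Submodule K W, Module.finrank K F = 3 ∧
          U = Submodule.span K {x : ⋀[K]^2 W | ∃ v ∈ F, ∃ w ∈ F,
            (x : ExteriorAlgebra K W) = ExteriorAlgebra.ι K v * ExteriorAlgebra.ι K w}) ∨
       (∃ N : Submodule K W, Module.finrank K N = 1 ∧
          U = Submodule.span K {x : ⋀[K]^2 W | ∃ v ∈ N, ∃ w : W,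
            (x : ExteriorAlgebra K W) = ExteriorAlgebra.ι K v * ExteriorAlgebra.ι K w}))) ∧
    (∀ F F' : Submodule K W,
      (Module.finrank K F = 3 ∧
        U = Submodule.span K {x : ⋀[K]^2 W | ∃ v ∈ F, ∃ w ∈ F,
          (x : ExteriorAlgebra K W) = ExteriorAlgebra.ι K v * ExteriorAlgebra.ι K w}) →
      (Module.finrank K F' = 3 ∧
        U = Submodule.span K {x : ⋀[K]^2 W | ∃ v ∈ F', ∃ w ∈ F',
          (x : ExteriorAlgebra K W) = ExteriorAlgebra.ι K v * ExteriorAlgebra.ι K w}) →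
      F = F') ∧
    (∀ N N' : Submodule K W,
      (Module.finrank K N = 1 ∧
        U = Submodule.span K {x : ⋀[K]^2 W | ∃ v ∈ N, ∃ w : W,
          (x : ExteriorAlgebra K W) = ExteriorAlgebra.ι K v * ExteriorAlgebra.ι K w}) →
      (Module.finrank K N' = 1 ∧
        U = Submodule.span K {x : ⋀[K]^2 W | ∃ v ∈ N', ∃ w : W,
          (x : ExteriorAlgebra K W) = ExteriorAlgebra.ι K v * ExteriorAlgebra.ι K w}) →
      N = N') := by
  have hB0 (x y : ⋀[K]^2 W) : B x y = 0 ↔ (x : ExteriorAlgebra K W) * y = 0 := by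
    rw [hB, map_eq_zero_iff θ (injective_dual_exteriorPower_of_ne_zero hW hθ), ← hwedge,
      ZeroMemClass.coe_eq_zero]
  simp only [hB0, span_setOf_coe_eq_ι_mul_ι, span_setOf_coe_eq_ι_mul_ι_top]
  refine ⟨forall_mul_eq_zero_iff_eq_map₂_vectorWedge hK2 hW hU, ?_, ?_⟩
  · rintro F F' ⟨hF, hUF⟩ ⟨hF', hUF'⟩
    have heq := hUF.symm.trans hUF'
    exact (le_of_map₂_vectorWedge_self_le (by omega) heq.le).antisymm
      (le_of_map₂_vectorWedge_self_le (by omega) heq.ge)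
  · rintro N N' ⟨hN, hUN⟩ ⟨hN', hUN'⟩
    have heq := hUN.symm.trans hUN'
    exact (le_of_map₂_vectorWedge_top_le (by omega) heq.le).antisymm
      (le_of_map₂_vectorWedge_top_le (by omega) heq.ge)
end
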